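/- arXiv:cs/0207072 — 2 statements merged into one kernel-verified Lean document; each statement's English description precedes it below -/
import Mathlib

section
/- Let Φ = Q_n X_n Q_{n-1} X_{n-1} ⋯ ∀X_2 ∃X_1 ψ (n ≥ 1) be a QBF with alternating quantifiers whose innermost quantifier is ∃X_1, where ψ is propositional over the pairwise disjoint atom sets X_1,…,X_n. Let u be a fresh atom, ab ∈ Ab, φ = ψ ∨ u, and define the NATs T_0 = { : φ}, T_1 = {X_1, u : φ, u ↔ ab}, T_{2k} = {X_1,…,X_{2k}, u : T_{2k-1}, u ↔ ¬ab} for 2k ∈ {2,…,n}, and T_{2k+1} = {X_1,…,X_{2k+1}, u : T_{2k}, u ↔ ab} for 2k+1 ∈ {3,…,n}. Then for every n ≥ 1 and every truth assignment ν to X_n, T_{n-1} has some model extending ν; moreover, if n is odd then T_{n-1} ⊨ u if and only if Φ is false, and if n is even then T_{n-1} ⊨ ¬u if and only if Φ is true. -/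
/-!
STATEMENT 8: the nested NATs `T₀, T₁, …` express the evaluation of an alternating QBF
`Φ = Qₙ Xₙ ⋯ ∀X₂ ∃X₁ ψ`.
-/

namespace NestedCirc

universe u
variable {α : Type u}

/-- Propositional formulas over atoms `α`. -/
inductive PForm (α : Type u) : Type u where
  | tru : PForm α
  | fls : PForm α
  | atom : α → PForm α
  | neg : PForm α → PForm α
  | conj : PForm α → PForm α → PForm α
  | disj : PForm α → PForm α → PForm α

namespace PForm

/-- Satisfaction of a propositional formula in an interpretation (set of true atoms). -/
def sat : PForm α → Set α → Prop
  | tru, _ => True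
  | fls, _ => False
  | atom a, M => a ∈ M
  | neg φ, M => ¬ φ.sat M
  | conj φ ψ, M => φ.sat M ∧ ψ.sat M
  | disj φ ψ, M => φ.sat M ∨ ψ.sat M

/-- Implication `φ → ψ`. -/
def imp (φ ψ : PForm α) : PForm α := disj (neg φ) ψ

/-- Equivalence `φ ↔ ψ`. -/
def iffF (φ ψ : PForm α) : PForm α := conj (imp φ ψ) (imp ψ φ)

/-- The atoms occurring in a formula. -/
def atoms : PForm α → Set α
  | tru => ∅
  | fls => ∅
  | atom a => {a}
  | neg φ => φ.atoms
  | conj φ ψ => φ.atoms ∪ ψ.atoms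
  | disj φ ψ => φ.atoms ∪ ψ.atoms

/-- Conjunction of a list of formulas. -/
def conjList (l : List (PForm α)) : PForm α := l.foldr conj tru

end PForm

/-- `M ≤_{P;Z} M'` : `M` agrees with `M'` on the fixed atoms `(P ∪ Z)ᶜ`
and is smaller or equal on the minimized atoms `P`. -/
def lePZ (P Z M M' : Set α) : Prop :=
  M ∩ P ⊆ M' ∩ P ∧ M ∩ (P ∪ Z)ᶜ = M' ∩ (P ∪ Z)ᶜ

/-- `M <_{P;Z} M'` (strict preference). -/
def ltPZ (P Z M M' : Set α) : Prop := lePZ P Z M M' ∧ ¬ lePZ P Z M' M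

/-- A block `{C : B₁,…,Bₘ}` of a nested abnormality theory: the described atoms `C`,
the members that are propositional formulas, and the members that are blocks. -/
inductive Block (α : Type u) : Type u where
  | mk : Set α → List (PForm α) → List (Block α) → Block α

/-- Satisfaction of a block: `M ⊨ {C : B₁,…,Bₘ}` iff some interpretation `M*` agreeing
with `M` outside `Ab` satisfies every member and is `(Ab;C)`-minimal doing so. -/
def Block.sat (Ab : Set α) : Block α → Set α → Prop
  | .mk C fs bs, M =>
      ∃ Ms : Set α, Ms ∩ Abᶜ = M ∩ Abᶜ ∧
        ((∀ f ∈ fs, f.sat Ms) ∧ ∀ b ∈ bs, Block.sat Ab b Ms) ∧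
        ∀ N : Set α, ((∀ f ∈ fs, f.sat N) ∧ ∀ b ∈ bs, Block.sat Ab b N) → ¬ ltPZ Ab C N Ms

/-- A nested abnormality theory (NAT): a finite collection of blocks. -/
abbrev NAT (α : Type u) := List (Block α)

/-- `M ⊨ T` iff `M` satisfies every block of `T`. -/
def NAT.sat (Ab : Set α) (T : NAT α) (M : Set α) : Prop := ∀ B ∈ T, Block.sat Ab B M

/-- Override `M` on the atoms `A` by the assignment `I`. -/
def ovr (M A I : Set α) : Set α := (M \ A) ∪ (I ∩ A)

/-- `X 1 ∪ ⋯ ∪ X k`. -/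
def Xup (X : ℕ → Set α) : ℕ → Set α
  | 0 => ∅
  | k + 1 => Xup X k ∪ X (k + 1)

/-- Truth of the QBF `Q_k X_k ⋯ ∀X₂ ∃X₁ ψ` relative to the partial assignment `M` of
the remaining atoms, where the quantifiers alternate and the innermost quantifier
(`k = 1`) is existential: `Q_k = ∃` for odd `k` and `Q_k = ∀` for even `k`. -/
def qbfVal (ψ : PForm α) (X : ℕ → Set α) : ℕ → Set α → Prop
  | 0, M => ψ.sat M
  | k + 1, M =>
      if (k + 1) % 2 = 1 then ∃ I : Set α, qbfVal ψ X k (ovr M (X (k + 1)) I)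
      else ∀ I : Set α, qbfVal ψ X k (ovr M (X (k + 1)) I)

/-- The NATs (single blocks) `T₀ = { : φ}`, `T₁ = {X₁, u : φ, u ↔ ab}`,
`T_{2k} = {X₁,…,X_{2k}, u : T_{2k-1}, u ↔ ¬ab}` and
`T_{2k+1} = {X₁,…,X_{2k+1}, u : T_{2k}, u ↔ ab}`, where `φ = ψ ∨ u`. -/
def Tnat (ψ : PForm α) (X : ℕ → Set α) (u ab : α) : ℕ → Block α
  | 0 => .mk ∅ [ψ.disj (.atom u)] []
  | 1 => .mk (Xup X 1 ∪ {u}) [ψ.disj (.atom u), PForm.iffF (.atom u) (.atom ab)] []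
  | j + 2 => .mk (Xup X (j + 2) ∪ {u})
      [PForm.iffF (.atom u) (if (j + 2) % 2 = 0 then .neg (.atom ab) else .atom ab)]
      [Tnat ψ X u ab (j + 1)]

/-!
Read the QBF as a game in which the existential player moves at the odd levels and the universal
player at the even ones, and let `u` record a win of the universal player. Minimizing `ab` under
`u ↔ ab` or `u ↔ ¬ab` makes the block `T_{k+1}` retain, among the models of `T_k` that share the
fixed atoms, those recording a win of the player who moves at level `k + 1`, whenever there is one.
Hence `T_{k+1}` has a model recording a loss of that player exactly when the player loses the game
from the given fixed atoms, and passing to the next level only frees the atoms of the next move.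
-/

section Agreement

variable {A B M N : Set α} {a : α}

/-- `M` and `N` agree on all atoms outside `A`, in the form used by `lePZ` and `Block.sat`. -/
def AgreeOff (A M N : Set α) : Prop := M ∩ Aᶜ = N ∩ Aᶜ

theorem agreeOff_iff : AgreeOff A M N ↔ ∀ a ∉ A, (a ∈ M ↔ a ∈ N) := by
  simp only [AgreeOff, Set.ext_iff, Set.mem_inter_iff, Set.mem_compl_iff]
  exact forall_congr' fun a => by tauto

theorem agreeOff_univ (M N : Set α) : AgreeOff Set.univ M N := by
  simp only [AgreeOff, Set.compl_univ, Set.inter_empty]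

theorem agreeOff_sdiff_self (A M : Set α) : AgreeOff A M (M \ A) :=
  agreeOff_iff.2 fun _ ha => (and_iff_left ha).symm

theorem agreeOff_insert (ha : a ∈ A) (M : Set α) : AgreeOff A M (insert a M) :=
  agreeOff_iff.2 fun _ hb => (or_iff_right (ne_of_mem_of_not_mem ha hb).symm).symm

namespace AgreeOff

theorem mem_iff (h : AgreeOff A M N) (ha : a ∉ A) : a ∈ M ↔ a ∈ N :=
  agreeOff_iff.1 h a ha

theorem mono (h : AgreeOff A M N) (hAB : A ⊆ B) : AgreeOff B M N :=
  agreeOff_iff.2 fun _ ha => h.mem_iff fun ha' => ha (hAB ha')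

theorem inter_eq_of_disjoint (h : AgreeOff A M N) (hAB : Disjoint A B) : M ∩ B = N ∩ B :=
  Set.ext fun _ => and_congr_left fun ha => h.mem_iff (Set.disjoint_right.1 hAB ha)

end AgreeOff

theorem exists_agreeOff_ovr_iff : (∃ I, AgreeOff A (ovr M B I) N) ↔ AgreeOff (A ∪ B) M N := by
  simp only [agreeOff_iff, ovr, Set.mem_union, Set.mem_sdiff, Set.mem_inter_iff]
  refine ⟨fun ⟨I, h⟩ a ha => ?_, fun h => ⟨N, fun a ha => ?_⟩⟩ <;>
  · have := h a
    tauto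

/-- The property `P` of interpretations does not depend on the atoms in `A`. -/
def Ignores (A : Set α) (P : Set α → Prop) : Prop :=
  ∀ ⦃M N⦄, AgreeOff A M N → (P M ↔ P N)

end Agreement

namespace PForm

theorem sat_congr {φ : PForm α} {M N : Set α} (h : ∀ a ∈ φ.atoms, (a ∈ M ↔ a ∈ N)) :
    φ.sat M ↔ φ.sat N := by
  induction φ with
  | tru => rfl
  | fls => rfl
  | atom a => exact h a rfl
  | neg φ ih => exact not_congr (ih h)
  | conj φ χ ihφ ihχ =>
    exact and_congr (ihφ fun a ha => h a (Or.inl ha)) (ihχ fun a ha => h a (Or.inr ha))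
  | disj φ χ ihφ ihχ =>
    exact or_congr (ihφ fun a ha => h a (Or.inl ha)) (ihχ fun a ha => h a (Or.inr ha))

theorem ignores_sat {φ : PForm α} {A : Set α} (h : Disjoint φ.atoms A) : Ignores A φ.sat :=
  fun _ _ hMN => sat_congr fun _ ha => hMN.mem_iff (Set.disjoint_left.1 h ha)

theorem sat_iffF (φ χ : PForm α) (M : Set α) :
    (iffF φ χ).sat M ↔ (φ.sat M ↔ χ.sat M) := by
  simp only [iffF, imp, sat]
  tauto

end PForm

section Circumscription

variable {P Z M N : Set α} {a : α}

theorem not_ltPZ_sdiff (P Z M N : Set α) : ¬ ltPZ P Z N (M \ P) :=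
  fun h => h.2 ⟨fun _ ha => absurd ha.2 ha.1.2, h.1.2.symm⟩

theorem ltPZ_sdiff_of_mem (haP : a ∈ P) (haM : a ∈ M) (h : AgreeOff (P ∪ Z) M N) :
    ltPZ P Z (N \ P) M := by
  have hagree : AgreeOff (P ∪ Z) N (N \ P) :=
    (agreeOff_sdiff_self P N).mono Set.subset_union_left
  exact ⟨⟨fun _ hb => absurd hb.2 hb.1.2, (h.trans hagree).symm⟩,
    fun hle => (hle.1 ⟨haM, haP⟩).1.2 haP⟩

theorem notMem_of_ltPZ_insert_sdiff (h : ltPZ P Z N (insert a (M \ P))) : a ∉ N := by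
  refine fun ha => h.2 ⟨?_, h.1.2.symm⟩
  rintro b ⟨rfl | hb, hbP⟩
  · exact ⟨ha, hbP⟩
  · exact absurd hbP hb.2

end Circumscription

section Preference

variable {A M : Set α} {P G : Set α → Prop}

/-- The models of `P` that satisfy the preference `G`, together with those for which no model of
`P` agreeing with them outside `A` satisfies `G`. -/
def Preferred (A : Set α) (P G : Set α → Prop) (M : Set α) : Prop :=
  P M ∧ ∀ N, AgreeOff A M N → P N → G N → G M

theorem exists_preferred (h : ∃ N, AgreeOff A M N ∧ P N) :
    ∃ N, AgreeOff A M N ∧ Preferred A P G N := by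
  by_cases hG : ∃ N, AgreeOff A M N ∧ P N ∧ G N
  · obtain ⟨N, hMN, hPN, hGN⟩ := hG
    exact ⟨N, hMN, hPN, fun _ _ _ _ => hGN⟩
  · obtain ⟨N, hMN, hPN⟩ := h
    exact ⟨N, hMN, hPN, fun N' hNN' hPN' hGN' => absurd ⟨N', hMN.trans hNN', hPN', hGN'⟩ hG⟩

theorem exists_preferred_and_not_iff (h : ∃ N, AgreeOff A M N ∧ P N) :
    (∃ N, AgreeOff A M N ∧ Preferred A P G N ∧ ¬ G N) ↔
      ¬ ∃ N, AgreeOff A M N ∧ P N ∧ G N := by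
  constructor
  · rintro ⟨N, hMN, ⟨-, hpref⟩, hGN⟩ ⟨N', hMN', hPN', hGN'⟩
    exact hGN (hpref N' (hMN.symm.trans hMN') hPN' hGN')
  · intro hG
    obtain ⟨N, hMN, hN⟩ := exists_preferred (G := G) h
    exact ⟨N, hMN, hN, fun hGN => hG ⟨N, hMN, hN.1, hGN⟩⟩

end Preference

namespace Block

variable {Ab C M : Set α} {fs : List (PForm α)} {bs : List (Block α)}

/-- `M` satisfies all members, formulas `fs` and blocks `bs`, of a block. -/
def SatMembers (Ab : Set α) (fs : List (PForm α)) (bs : List (Block α)) (M : Set α) : Prop :=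
  (∀ f ∈ fs, f.sat M) ∧ ∀ b ∈ bs, Block.sat Ab b M

theorem sat_mk_iff : Block.sat Ab (.mk C fs bs) M ↔
    ∃ Ms, AgreeOff Ab Ms M ∧ SatMembers Ab fs bs Ms ∧
      ∀ N, SatMembers Ab fs bs N → ¬ ltPZ Ab C N Ms := by
  rw [Block.sat]
  rfl

theorem ignores_sat (Ab : Set α) (B : Block α) : Ignores Ab (Block.sat Ab B) := by
  obtain ⟨C, fs, bs⟩ := B
  intro M N hMN
  simp only [sat_mk_iff]
  exact exists_congr fun Ms => and_congr_left' ⟨fun h => h.trans hMN, fun h => h.trans hMN.symm⟩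

theorem sat_mk_iff_satMembers (h : Ignores Ab (SatMembers Ab fs bs)) :
    Block.sat Ab (.mk C fs bs) M ↔ SatMembers Ab fs bs M := by
  rw [sat_mk_iff]
  constructor
  · rintro ⟨Ms, hMs, hmem, -⟩
    exact (h hMs).1 hmem
  · intro hM
    have hagree := agreeOff_sdiff_self Ab M
    exact ⟨M \ Ab, hagree.symm, (h hagree).1 hM, fun N _ => not_ltPZ_sdiff Ab C M N⟩

theorem sat_mk_iff_preferred {ab : α} {P G : Set α → Prop} (hab : ab ∈ Ab) (hP : Ignores Ab P)
    (hG : Ignores Ab G) (hmem : ∀ M, SatMembers Ab fs bs M ↔ P M ∧ (G M ↔ ab ∉ M)) :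
    Block.sat Ab (.mk C fs bs) M ↔ Preferred (Ab ∪ C) P G M := by
  have hsub : Ab ⊆ Ab ∪ C := Set.subset_union_left
  have hclear (N : Set α) : AgreeOff Ab N (N \ Ab) := agreeOff_sdiff_self Ab N
  have hmem_clear {N : Set α} (hPN : P N) (hGN : G N) : SatMembers Ab fs bs (N \ Ab) :=
    (hmem _).2 ⟨(hP (hclear N)).1 hPN, iff_of_true ((hG (hclear N)).1 hGN) fun h => h.2 hab⟩
  rw [sat_mk_iff]
  constructor
  · rintro ⟨Ms, hMs, hMs_mem, hmin⟩
    obtain ⟨hPMs, hGMs⟩ := (hmem Ms).1 hMs_mem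
    refine ⟨(hP hMs).1 hPMs, fun N hMN hPN hGN => by_contra fun hGM => ?_⟩
    have habMs : ab ∈ Ms := not_not.1 fun h => hGM ((hG hMs).1 (hGMs.2 h))
    exact hmin _ (hmem_clear hPN hGN) (ltPZ_sdiff_of_mem hab habMs ((hMs.mono hsub).trans hMN))
  · rintro ⟨hPM, hpref⟩
    by_cases hGM : G M
    · exact ⟨M \ Ab, (hclear M).symm, hmem_clear hPM hGM, fun N _ => not_ltPZ_sdiff Ab C M N⟩
    · have hagree : AgreeOff Ab M (insert ab (M \ Ab)) :=
        (hclear M).trans (agreeOff_insert hab _)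
      refine ⟨insert ab (M \ Ab), hagree.symm, (hmem _).2 ⟨(hP hagree).1 hPM, ?_⟩, ?_⟩
      · exact iff_of_false (fun h => hGM ((hG hagree).2 h)) (not_not.2 (Set.mem_insert _ _))
      · intro N hN hlt
        obtain ⟨hPN, hGN⟩ := (hmem N).1 hN
        have hMN : AgreeOff (Ab ∪ C) M N := (hagree.mono hsub).trans hlt.1.2.symm
        exact hGM (hpref N hMN hPN (hGN.2 (notMem_of_ltPZ_insert_sdiff hlt)))

end Block

section Hierarchy

variable {Ab : Set α} {X : ℕ → Set α} {u ab : α} {ψ : PForm α}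

/-- The atoms that may vary in the minimization of `T_k`: the abnormality atoms, `X₁, …, X_k`
and `u`. For `k = 0` the atom `u` is included although `T₀` fixes it. -/
def varying (Ab : Set α) (X : ℕ → Set α) (u : α) (k : ℕ) : Set α := Ab ∪ (Xup X k ∪ {u})

/-- The player who owns `Q_k` (existential for odd `k`, universal for even `k`) wins the evaluation
game of `Q_k X_k ⋯ ∃X₁ ψ` from the assignment `M`. By convention the universal player owns level
`0`, where no move is left. -/
def OwnerWins (ψ : PForm α) (X : ℕ → Set α) (k : ℕ) (M : Set α) : Prop :=
  qbfVal ψ X k M ↔ Odd k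

/-- With `u` read as a win of the universal player, `M` records a win of the player who owns
`Q_k`. -/
def FavorsOwner (u : α) (k : ℕ) (M : Set α) : Prop := u ∈ M ↔ Even k

theorem varying_succ (Ab : Set α) (X : ℕ → Set α) (u : α) (k : ℕ) :
    varying Ab X u (k + 1) = varying Ab X u k ∪ X (k + 1) := by
  simp only [varying, Xup, Set.union_assoc, Set.union_comm {u}]

theorem varying_subset_succ (Ab : Set α) (X : ℕ → Set α) (u : α) (k : ℕ) :
    varying Ab X u k ⊆ varying Ab X u (k + 1) :=
  varying_succ Ab X u k ▸ Set.subset_union_left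

theorem disjoint_Xup_left {A : Set α} {k : ℕ} (h : ∀ i, 1 ≤ i → i ≤ k → Disjoint (X i) A) :
    Disjoint (Xup X k) A := by
  induction k with
  | zero => exact Set.empty_disjoint A
  | succ k ih =>
    exact (ih fun i hi hik => h i hi (Nat.le_succ_of_le hik)).union_left
      (h (k + 1) (Nat.le_add_left 1 k) le_rfl)

theorem ignores_favorsOwner (hu : u ∉ Ab) (k : ℕ) : Ignores Ab (FavorsOwner u k) :=
  fun _ _ h => iff_congr (h.mem_iff hu) Iff.rfl

theorem favorsOwner_succ (u : α) (k : ℕ) (M : Set α) :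
    FavorsOwner u (k + 1) M ↔ ¬ FavorsOwner u k M := by
  simp only [FavorsOwner, Nat.even_add_one]
  tauto

theorem ownerWins_succ (ψ : PForm α) (X : ℕ → Set α) (k : ℕ) (M : Set α) :
    OwnerWins ψ X (k + 1) M ↔ ∃ I, ¬ OwnerWins ψ X k (ovr M (X (k + 1)) I) := by
  rcases Nat.even_or_odd k with hk | hk
  · have hodd : Odd (k + 1) := hk.add_one
    simp [OwnerWins, qbfVal, Nat.odd_iff.1 hodd, hodd, Nat.not_odd_iff_even.2 hk]
  · have heven : Even (k + 1) := hk.add_one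
    simp [OwnerWins, qbfVal, Nat.even_iff.1 heven, Nat.not_odd_iff_even.2 heven, hk]

theorem sat_Tnat_zero (hφ : Disjoint (ψ.atoms ∪ {u}) Ab) (M : Set α) :
    Block.sat Ab (Tnat ψ X u ab 0) M ↔ ψ.sat M ∨ u ∈ M := by
  have hmem : Block.SatMembers Ab [ψ.disj (.atom u)] [] = (ψ.disj (.atom u)).sat := by
    funext N
    simp [Block.SatMembers]
  rw [Tnat, Block.sat_mk_iff_satMembers (hmem ▸ PForm.ignores_sat hφ), hmem]
  rfl

theorem sat_Tnat_succ (hab : ab ∈ Ab) (hφ : Disjoint (ψ.atoms ∪ {u}) Ab) (k : ℕ) (M : Set α) :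
    Block.sat Ab (Tnat ψ X u ab (k + 1)) M ↔
      Preferred (varying Ab X u (k + 1)) (Block.sat Ab (Tnat ψ X u ab k))
        (FavorsOwner u (k + 1)) M := by
  have huAb : u ∉ Ab := Set.disjoint_left.1 hφ (Or.inr rfl)
  have hT := Block.ignores_sat Ab (Tnat ψ X u ab k)
  have hG := ignores_favorsOwner huAb (k + 1)
  cases k with
  | zero =>
    refine Block.sat_mk_iff_preferred hab hT hG fun N => ?_
    rw [sat_Tnat_zero hφ]
    simp [Block.SatMembers, PForm.sat_iffF, PForm.sat, FavorsOwner, not_iff_not]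
  | succ j =>
    refine Block.sat_mk_iff_preferred hab hT hG fun N => ?_
    simp only [Block.SatMembers, List.mem_singleton, forall_eq, PForm.sat_iffF, FavorsOwner,
      Nat.even_iff]
    split_ifs with hj <;> simp [PForm.sat, hj, and_comm, not_iff_not]

theorem exists_agreeOff_sat_Tnat (hab : ab ∈ Ab) (hφ : Disjoint (ψ.atoms ∪ {u}) Ab) (k : ℕ)
    (M : Set α) :
    ∃ N, AgreeOff (varying Ab X u k) M N ∧ Block.sat Ab (Tnat ψ X u ab k) N := by
  induction k with
  | zero =>
    have hvar : u ∈ varying Ab X u 0 := Or.inr (Or.inr rfl)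
    exact ⟨insert u M, agreeOff_insert hvar M,
      (sat_Tnat_zero hφ _).2 (Or.inr (Set.mem_insert u M))⟩
  | succ k ih =>
    obtain ⟨N, hMN, hN⟩ := ih
    simp only [sat_Tnat_succ hab hφ]
    exact exists_preferred ⟨N, hMN.mono (varying_subset_succ Ab X u k), hN⟩

theorem exists_sat_Tnat_zero_notMem_iff (hu : u ∉ ψ.atoms) (hφ : Disjoint (ψ.atoms ∪ {u}) Ab)
    (M : Set α) :
    (∃ N, AgreeOff (varying Ab X u 0) M N ∧ Block.sat Ab (Tnat ψ X u ab 0) N ∧ u ∉ N) ↔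
      ψ.sat M := by
  have hψ : Ignores (varying Ab X u 0) ψ.sat := by
    refine PForm.ignores_sat ((Set.disjoint_union_left.1 hφ).1.union_right ?_)
    simpa only [Xup, Set.empty_union, Set.disjoint_singleton_right] using hu
  simp only [sat_Tnat_zero hφ]
  constructor
  · rintro ⟨N, hMN, hN, huN⟩
    exact (hψ hMN).2 (hN.resolve_right huN)
  · intro hM
    have hagree : AgreeOff (varying Ab X u 0) M (M \ {u}) :=
      (agreeOff_sdiff_self {u} M).mono fun _ h => Or.inr (Or.inr h)
    exact ⟨M \ {u}, hagree, Or.inl ((hψ hagree).1 hM), fun h => h.2 rfl⟩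

theorem ownerWins_succ_iff_exists_favorsOwner {P : Set α → Prop} {k : ℕ}
    (h : ∀ M, (∃ N, AgreeOff (varying Ab X u k) M N ∧ P N ∧ ¬ FavorsOwner u k N) ↔
      ¬ OwnerWins ψ X k M) (M : Set α) :
    OwnerWins ψ X (k + 1) M ↔
      ∃ N, AgreeOff (varying Ab X u (k + 1)) M N ∧ P N ∧ FavorsOwner u (k + 1) N := by
  simp only [ownerWins_succ, ← h, favorsOwner_succ, varying_succ, ← exists_agreeOff_ovr_iff]
  rw [exists_comm]
  simp only [exists_and_right]

theorem exists_sat_Tnat_not_favorsOwner_iff (hab : ab ∈ Ab) (hu : u ∉ ψ.atoms)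
    (hφ : Disjoint (ψ.atoms ∪ {u}) Ab) (k : ℕ) (M : Set α) :
    (∃ N, AgreeOff (varying Ab X u k) M N ∧ Block.sat Ab (Tnat ψ X u ab k) N ∧
      ¬ FavorsOwner u k N) ↔ ¬ OwnerWins ψ X k M := by
  induction k generalizing M with
  | zero => simpa [FavorsOwner, OwnerWins, qbfVal] using exists_sat_Tnat_zero_notMem_iff hu hφ M
  | succ k ih =>
    have hmodel : ∃ N, AgreeOff (varying Ab X u (k + 1)) M N ∧
        Block.sat Ab (Tnat ψ X u ab k) N := by
      obtain ⟨N, hMN, hN⟩ := exists_agreeOff_sat_Tnat (X := X) hab hφ k M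
      exact ⟨N, hMN.mono (varying_subset_succ Ab X u k), hN⟩
    simp only [sat_Tnat_succ hab hφ]
    rw [exists_preferred_and_not_iff hmodel, ownerWins_succ_iff_exists_favorsOwner ih]

/-- `ψ` may have free atoms outside `X₁, …, X_{k+1}`; their truth values are those in `M`. -/
theorem nat_hierarchy_expresses_qbf_general (hab : ab ∈ Ab) (hu : u ∉ ψ.atoms)
    (hφ : Disjoint (ψ.atoms ∪ {u}) Ab) (k : ℕ) (M : Set α) :
    (∃ N, AgreeOff (varying Ab X u k) M N ∧ NAT.sat Ab [Tnat ψ X u ab k] N) ∧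
    (Odd (k + 1) →
      ((∀ N, AgreeOff (varying Ab X u (k + 1)) M N → NAT.sat Ab [Tnat ψ X u ab k] N → u ∈ N) ↔
        ¬ qbfVal ψ X (k + 1) M)) ∧
    (Even (k + 1) →
      ((∀ N, AgreeOff (varying Ab X u (k + 1)) M N → NAT.sat Ab [Tnat ψ X u ab k] N → u ∉ N) ↔
        qbfVal ψ X (k + 1) M)) := by
  have howner := ownerWins_succ_iff_exists_favorsOwner
    (exists_sat_Tnat_not_favorsOwner_iff (X := X) hab hu hφ k) M
  simp only [NAT.sat, List.mem_singleton, forall_eq]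
  refine ⟨exists_agreeOff_sat_Tnat hab hφ k M, fun hodd => ?_, fun heven => ?_⟩
  · simp only [OwnerWins, FavorsOwner, hodd, Nat.not_even_iff_odd.2 hodd, iff_true,
      iff_false] at howner
    simp only [howner, not_exists, not_and, not_not]
  · simp only [OwnerWins, FavorsOwner, heven, Nat.not_odd_iff_even.2 heven, iff_true,
      iff_false] at howner
    rw [← not_not (a := qbfVal ψ X (k + 1) M), howner]
    simp only [not_exists, not_and]

end Hierarchy

/-- Let `Φ = Qₙ Xₙ ⋯ ∀X₂ ∃X₁ ψ` (`n ≥ 1`) be a QBF with alternating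
quantifiers whose innermost quantifier is `∃X₁`, `ψ` propositional over the pairwise
disjoint sets `X₁,…,Xₙ`, `u` fresh, `ab ∈ Ab`, and `φ = ψ ∨ u`.  Then for every
truth assignment `ν` to `Xₙ`, `T_{n-1}` has some model extending `ν`; moreover if `n`
is odd then `T_{n-1} ⊨ u` iff `Φ` is false, and if `n` is even then `T_{n-1} ⊨ ¬u`
iff `Φ` is true. -/
theorem nat_hierarchy_expresses_qbf (Ab : Set α) (X : ℕ → Set α) (u ab : α)
    (ψ : PForm α) (n : ℕ) (hn : 1 ≤ n) (hab : ab ∈ Ab)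
    (hX : ∀ i j, 1 ≤ i → i < j → j ≤ n → Disjoint (X i) (X j))
    (hu : u ∉ Xup X n) (hAb : Disjoint (Xup X n ∪ {u}) Ab)
    (hAt : Xup X n ∪ {u} ∪ Ab = Set.univ)
    (hatoms : ψ.atoms ⊆ Xup X n) :
    (∀ ν : Set α, ∃ M : Set α,
        M ∩ X n = ν ∩ X n ∧ NAT.sat Ab [Tnat ψ X u ab (n - 1)] M) ∧
    (Odd n →
      ((∀ M : Set α, NAT.sat Ab [Tnat ψ X u ab (n - 1)] M → u ∈ M) ↔
        ¬ qbfVal ψ X n ∅)) ∧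
    (Even n →
      ((∀ M : Set α, NAT.sat Ab [Tnat ψ X u ab (n - 1)] M → u ∉ M) ↔
        qbfVal ψ X n ∅)) := by
  obtain ⟨k, rfl⟩ := Nat.exists_eq_add_of_le' hn
  have hφ : Disjoint (ψ.atoms ∪ {u}) Ab := hAb.mono_left (Set.union_subset_union_left _ hatoms)
  have hvarying : varying Ab X u (k + 1) = Set.univ := (Set.union_comm _ _).trans hAt
  have hX_sub : X (k + 1) ⊆ Xup X (k + 1) := Set.subset_union_right
  have hXup_disj : Disjoint (Xup X k) (X (k + 1)) :=
    disjoint_Xup_left fun i hi hik => hX i (k + 1) hi (Nat.lt_succ_of_le hik) le_rfl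
  have hAb_disj : Disjoint Ab (X (k + 1)) :=
    hAb.symm.mono_right (hX_sub.trans Set.subset_union_left)
  have hdisj : Disjoint (varying Ab X u k) (X (k + 1)) :=
    hAb_disj.union_left
      (hXup_disj.union_left (Set.disjoint_singleton_left.2 fun h => hu (hX_sub h)))
  have hgen := nat_hierarchy_expresses_qbf_general (X := X) hab (fun h => hu (hatoms h)) hφ k
  simp only [hvarying, agreeOff_univ, forall_const] at hgen
  refine ⟨fun ν => ?_, (hgen ∅).2⟩
  obtain ⟨M, hagree, hM⟩ := (hgen ν).1
  exact ⟨M, (hagree.inter_eq_of_disjoint hdisj).symm, hM⟩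

end NestedCirc
end

section
/- Elimination of fixed letters from a NAT: let T be a NAT, and let T' be obtained from T by, for each fixed letter q, introducing two fresh abnormality letters ab_q and ab'_q into Ab, adding the formula (q ↔ ab_q) ∧ (ab_q ↔ ¬ab'_q) as a new member in each block occurring in T in which q is fixed, and declaring q described in every block occurring in T. Then, modulo the set Ab' of auxiliary abnormality letters, T and T' are logically equivalent, i.e., they have the same sets of models on the original alphabet. -/
/-!
STATEMENT 14: elimination of fixed letters from a NAT via auxiliary abnormality letters.
-/

namespace NestedCirc

universe u
variable {α : Type u}

/-- Renaming the atoms of a propositional formula. -/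
def PForm.map {β : Type u} (g : α → β) : PForm α → PForm β
  | .tru => .tru
  | .fls => .fls
  | .atom a => .atom (g a)
  | .neg φ => .neg (φ.map g)
  | .conj φ ψ => .conj (φ.map g) (ψ.map g)
  | .disj φ ψ => .disj (φ.map g) (ψ.map g)

variable [Fintype α]

/-- A list enumerating a set of atoms (the alphabet is finite). -/
noncomputable def listOf (S : Set α) : List α := (Set.toFinite S).toFinset.toList

/-- The extended alphabet: `Sum.inl q` is the original letter `q`, and for every
letter `q` that may be fixed somewhere, `Sum.inr (false, q)` is the fresh abnormality
letter `ab_q` and `Sum.inr (true, q)` is the fresh abnormality letter `ab'_q`. -/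
abbrev ExtA (α : Type u) := α ⊕ Bool × α

/-- The extended set of abnormality letters: `Ab` together with all letters
`ab_q`, `ab'_q`. -/
def extAb (Ab : Set α) : Set (ExtA α) := Sum.inl '' Ab ∪ Sum.inr '' (Set.univ ×ˢ Abᶜ)

/-- The transformation eliminating fixed letters from a block: every letter of
`At ∖ Ab` is declared described, and for each letter `q` that was fixed in the block
(i.e., `q ∈ (C ∪ Ab)ᶜ`), the formula `(q ↔ ab_q) ∧ (ab_q ↔ ¬ab'_q)` is added as a new
member. -/
noncomputable def Block.elimFixed (Ab : Set α) : Block α → Block (ExtA α)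
  | .mk C fs bs =>
      .mk (Sum.inl '' Abᶜ)
        (((listOf ((C ∪ Ab)ᶜ)).map fun q =>
            PForm.conj
              (PForm.iffF (.atom (Sum.inl q)) (.atom (Sum.inr (false, q))))
              (PForm.iffF (.atom (Sum.inr (false, q))) (.neg (.atom (Sum.inr (true, q)))))) ++
          fs.map (PForm.map Sum.inl))
        (bs.attach.map fun b => Block.elimFixed Ab b.1)
  termination_by B => sizeOf B
  decreasing_by
    have := List.sizeOf_lt_of_mem b.2
    simp only [Block.mk.sizeOf_spec]
    omega

/-- Well-formed blocks: the described atoms of every block occurring in it are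
atoms not in `Ab`. -/
inductive Block.WF (Ab : Set α) : Block α → Prop where
  | mk {C : Set α} {fs : List (PForm α)} {bs : List (Block α)} :
      C ⊆ Abᶜ → (∀ b ∈ bs, b.WF Ab) → Block.WF Ab (.mk C fs bs)

/-!
The formulas added for a fixed letter `q` make `ab_q` a copy of `q` and `ab'_q` a copy of `¬q`.
Both copies are minimized, so passing to a preferred interpretation can change neither: `q` stays
fixed although it is now described. Conversely, a competitor of a minimal model in the old sense
agrees with it on the fixed letters, so it inherits the values of the new letters. As an
interpretation may be changed on abnormality letters before a block is tested, the new letters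
impose no constraint on the original alphabet, and the equivalence passes through the nesting by
induction.
-/

section

variable {β : Type u}

theorem inter_compl_eq_iff {P M M' : Set β} :
    M ∩ Pᶜ = M' ∩ Pᶜ ↔ ∀ x ∉ P, (x ∈ M ↔ x ∈ M') := by
  simp only [Set.ext_iff, Set.mem_inter_iff, Set.mem_compl_iff, and_congr_left_iff]

theorem lePZ_iff {P Z M M' : Set β} :
    lePZ P Z M M' ↔ (∀ x ∈ P, x ∈ M → x ∈ M') ∧ ∀ x ∉ P ∪ Z, (x ∈ M ↔ x ∈ M') := by
  rw [lePZ, inter_compl_eq_iff]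
  refine and_congr_left fun _ => ?_
  simp only [Set.subset_def, Set.mem_inter_iff, and_imp]
  exact forall_congr' fun x => by tauto

theorem PForm.sat_map {γ : Type u} (g : β → γ) (φ : PForm β) (N : Set γ) :
    (φ.map g).sat N ↔ φ.sat (g ⁻¹' N) := by
  induction φ <;> simp_all [PForm.map, PForm.sat]

/-- Circumscription of a class `S` of interpretations: the members of `S` that are minimal for
`<_{P;Z}`, that is, with `P` minimized, `Z` varied and all other letters fixed. -/
def circ (P Z : Set β) (S : Set (Set β)) : Set (Set β) :=
  {M | M ∈ S ∧ ∀ N ∈ S, ¬ ltPZ P Z N M}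

/-- The interpretations satisfying every member of a block, given by its formulas `fs` and its
subblocks `bs`. -/
def memberModels (Ab : Set β) (fs : List (PForm β)) (bs : List (Block β)) : Set (Set β) :=
  {M | (∀ f ∈ fs, f.sat M) ∧ ∀ b ∈ bs, b.sat Ab M}

theorem Block.sat_mk_iff_s14 {Ab C M : Set β} {fs : List (PForm β)} {bs : List (Block β)} :
    (Block.mk C fs bs).sat Ab M ↔
      ∃ Ms ∈ circ Ab C (memberModels Ab fs bs), Ms ∩ Abᶜ = M ∩ Abᶜ := by
  rw [Block.sat]
  exact exists_congr fun _ => and_comm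

/-- The formula `(q ↔ ab_q) ∧ (ab_q ↔ ¬ab'_q)` tying the fresh letters to `q`. -/
def markerFormula (q : β) : PForm (ExtA β) :=
  PForm.conj
    (PForm.iffF (.atom (Sum.inl q)) (.atom (Sum.inr (false, q))))
    (PForm.iffF (.atom (Sum.inr (false, q))) (.neg (.atom (Sum.inr (true, q)))))

/-- On the letters `q ∈ F`, the interpretation `N` has `ab_q` as a copy of `q` and `ab'_q` as a
copy of `¬q`. For `b = true` the condition `b = false ↔ q ∈ N` says `q ∉ N`, so the two copies are
treated uniformly. -/
def EncodesOn (F : Set β) (N : Set (ExtA β)) : Prop :=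
  ∀ q ∈ F, ∀ b, Sum.inr (b, q) ∈ N ↔ (b = false ↔ Sum.inl q ∈ N)

theorem sat_markerFormula_iff {q : β} {N : Set (ExtA β)} :
    (markerFormula q).sat N ↔ ∀ b, Sum.inr (b, q) ∈ N ↔ (b = false ↔ Sum.inl q ∈ N) := by
  simp only [markerFormula, PForm.iffF, PForm.imp, PForm.sat, Bool.forall_bool, true_iff,
    Bool.true_eq_false, false_iff]
  tauto

theorem EncodesOn.inl_mem_iff {F : Set β} {N N' : Set (ExtA β)} (hN : EncodesOn F N)
    (hN' : EncodesOn F N') (hle : ∀ b, ∀ q ∈ F, Sum.inr (b, q) ∈ N → Sum.inr (b, q) ∈ N') :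
    ∀ q ∈ F, (Sum.inl q ∈ N ↔ Sum.inl q ∈ N') := by
  intro q hq
  have grows : Sum.inl q ∈ N → Sum.inl q ∈ N' := by
    simpa [hN q hq, hN' q hq] using hle false q hq
  have shrinks : Sum.inl q ∉ N → Sum.inl q ∉ N' := by
    simpa [hN q hq, hN' q hq] using hle true q hq
  exact ⟨grows, not_imp_not.1 shrinks⟩

/-- The interpretations of the extended alphabet that extend a member of `S` and encode the letters
fixed in a block with described atoms `C`. -/
def encodedModels (Ab C : Set β) (S : Set (Set β)) : Set (Set (ExtA β)) :=
  {N | EncodesOn (C ∪ Ab)ᶜ N ∧ Sum.inl ⁻¹' N ∈ S}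

variable {Ab C : Set β} {S : Set (Set β)} {N N' : Set (ExtA β)}

theorem inl_mem_extAb {q : β} : Sum.inl q ∈ extAb Ab ↔ q ∈ Ab := by
  simp [extAb]

theorem inr_mem_extAb {b : Bool} {q : β} : Sum.inr (b, q) ∈ extAb Ab ↔ q ∉ Ab := by
  simp [extAb]

/-- The letters `inr (b, q)` with `q ∈ Ab` belong to the type `ExtA` but not to `extAb Ab`; they
are the only letters still fixed. -/
theorem lePZ_extAb_iff :
    lePZ (extAb Ab) (Sum.inl '' Abᶜ) N N' ↔
      (∀ q ∈ Ab, Sum.inl q ∈ N → Sum.inl q ∈ N') ∧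
      (∀ b, ∀ q ∉ Ab, Sum.inr (b, q) ∈ N → Sum.inr (b, q) ∈ N') ∧
      ∀ b, ∀ q ∈ Ab, (Sum.inr (b, q) ∈ N ↔ Sum.inr (b, q) ∈ N') := by
  have inl_not_fixed (q : β) : (Sum.inl q : ExtA β) ∈ extAb Ab ∪ Sum.inl '' Abᶜ := by
    simpa [inl_mem_extAb] using em (q ∈ Ab)
  have inr_fixed_iff (b : Bool) (q : β) :
      (Sum.inr (b, q) : ExtA β) ∉ extAb Ab ∪ Sum.inl '' Abᶜ ↔ q ∈ Ab := by
    simp [inr_mem_extAb]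
  simp only [lePZ_iff, Sum.forall, Prod.forall, inl_mem_extAb, inr_mem_extAb, inl_not_fixed,
    inr_fixed_iff, not_true_eq_false, false_imp_iff, forall_true_iff, true_and, and_assoc]

theorem lePZ_preimage_inl (hN : EncodesOn (C ∪ Ab)ᶜ N) (hN' : EncodesOn (C ∪ Ab)ᶜ N')
    (hle : lePZ (extAb Ab) (Sum.inl '' Abᶜ) N N') :
    lePZ Ab C (Sum.inl ⁻¹' N) (Sum.inl ⁻¹' N') := by
  obtain ⟨ab_le, marker_le, -⟩ := lePZ_extAb_iff.1 hle
  refine lePZ_iff.2 ⟨ab_le, ?_⟩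
  rw [Set.union_comm]
  exact hN.inl_mem_iff hN' fun b q hq => marker_le b q fun hAb => hq (.inr hAb)

theorem preimage_inl_mem_circ
    (hN : N ∈ circ (extAb Ab) (Sum.inl '' Abᶜ) (encodedModels Ab C S)) :
    Sum.inl ⁻¹' N ∈ circ Ab C S := by
  obtain ⟨⟨hEnc, hS⟩, hmin⟩ := hN
  refine ⟨hS, fun K hK ⟨hle, hnot⟩ => ?_⟩
  let K' : Set (ExtA β) := Sum.inl '' K ∪ Sum.inr '' (Sum.inr ⁻¹' N)
  have preimage_K' : Sum.inl ⁻¹' K' = K := by ext; simp [K']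
  have inl_mem_K' (q) : Sum.inl q ∈ K' ↔ q ∈ K := by simp [K']
  have inr_mem_K' (p) : Sum.inr p ∈ K' ↔ Sum.inr p ∈ N := by simp [K']
  obtain ⟨ab_le, fixed_iff⟩ := lePZ_iff.1 hle
  have encodes_K' : EncodesOn (C ∪ Ab)ᶜ K' := fun q hq b => by
    rw [inr_mem_K', inl_mem_K', fixed_iff q (by rwa [Set.union_comm]), hEnc q hq b,
      Set.mem_preimage]
  refine hmin K' ⟨encodes_K', preimage_K'.symm ▸ hK⟩ ⟨?_, fun hge => hnot ?_⟩
  · simpa [lePZ_extAb_iff, inl_mem_K', inr_mem_K'] using ab_le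
  · simpa only [preimage_K'] using lePZ_preimage_inl hEnc encodes_K' hge

/-- The extension of `M` in which the fresh letters encode the letters outside `C ∪ Ab`, those of
the letters in `C \ Ab` are false, and the surplus letters `inr (b, q)` with `q ∈ Ab` are as in
`N`. -/
def encode (Ab C M : Set β) (N : Set (ExtA β)) : Set (ExtA β) :=
  Sum.inl '' M ∪ Sum.inr '' {p | (p.2 ∉ C ∪ Ab ∧ (p.1 = false ↔ p.2 ∈ M)) ∨
    (p.2 ∈ Ab ∧ Sum.inr p ∈ N)}

variable {M : Set β}

theorem inl_mem_encode {q : β} : Sum.inl q ∈ encode Ab C M N ↔ q ∈ M := by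
  simp [encode]

theorem preimage_inl_encode : Sum.inl ⁻¹' encode Ab C M N = M :=
  Set.ext fun _ => inl_mem_encode

theorem inr_mem_encode {b : Bool} {q : β} : Sum.inr (b, q) ∈ encode Ab C M N ↔
    (q ∉ C ∪ Ab ∧ (b = false ↔ q ∈ M)) ∨ (q ∈ Ab ∧ Sum.inr (b, q) ∈ N) := by
  simp [encode]

theorem inr_mem_encode_of_mem {b : Bool} {q : β} (hq : q ∈ Ab) :
    Sum.inr (b, q) ∈ encode Ab C M N ↔ Sum.inr (b, q) ∈ N := by
  simp [inr_mem_encode, hq]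

theorem encodesOn_encode : EncodesOn (C ∪ Ab)ᶜ (encode Ab C M N) := fun q hq b => by
  have not_mem : q ∉ C ∪ Ab := hq
  have not_mem_Ab : q ∉ Ab := fun h => hq (.inr h)
  simp only [inr_mem_encode, inl_mem_encode, not_mem, not_mem_Ab, not_false_eq_true, true_and,
    false_and, or_false]

theorem encode_inter_compl_extAb (h : M ∩ Abᶜ = Sum.inl ⁻¹' N ∩ Abᶜ) :
    encode Ab C M N ∩ (extAb Ab)ᶜ = N ∩ (extAb Ab)ᶜ := by
  rw [inter_compl_eq_iff] at h ⊢
  rintro (q | ⟨b, q⟩) hx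
  · rw [inl_mem_encode]
    exact h q (inl_mem_extAb.not.1 hx)
  · exact inr_mem_encode_of_mem (not_not.1 (inr_mem_extAb.not.1 hx))

theorem lePZ_encode (hN' : EncodesOn (C ∪ Ab)ᶜ N')
    (hsurplus : ∀ b, ∀ q ∈ Ab, (Sum.inr (b, q) ∈ N ↔ Sum.inr (b, q) ∈ N'))
    (hle : lePZ Ab C M (Sum.inl ⁻¹' N')) :
    lePZ (extAb Ab) (Sum.inl '' Abᶜ) (encode Ab C M N) N' := by
  obtain ⟨ab_le, fixed_iff⟩ := lePZ_iff.1 hle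
  refine lePZ_extAb_iff.2 ⟨?_, fun b q hAb hmem => ?_, fun b q hAb => ?_⟩
  · exact fun q hAb hq => ab_le q hAb (inl_mem_encode.1 hq)
  · obtain ⟨hq, hb⟩ | ⟨hAb', -⟩ := inr_mem_encode.1 hmem
    · exact (hN' q hq b).2 (hb.trans (fixed_iff q (by rwa [Set.union_comm])))
    · exact absurd hAb' hAb
  · rw [inr_mem_encode_of_mem hAb, hsurplus b q hAb]

theorem encode_mem_circ (hM : M ∈ circ Ab C S) :
    encode Ab C M N ∈ circ (extAb Ab) (Sum.inl '' Abᶜ) (encodedModels Ab C S) := by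
  obtain ⟨hS, hmin⟩ := hM
  refine ⟨⟨encodesOn_encode, by rwa [preimage_inl_encode]⟩, ?_⟩
  rintro K ⟨hEnc, hK⟩ ⟨hle, hnot⟩
  have surplus_iff : ∀ b, ∀ q ∈ Ab, (Sum.inr (b, q) ∈ N ↔ Sum.inr (b, q) ∈ K) := fun b q hq =>
    (inr_mem_encode_of_mem hq).symm.trans ((lePZ_extAb_iff.1 hle).2.2 b q hq).symm
  refine hmin _ hK ⟨?_, fun hge => hnot (lePZ_encode hEnc surplus_iff hge)⟩
  simpa only [preimage_inl_encode] using lePZ_preimage_inl hEnc encodesOn_encode hle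

theorem exists_mem_circ_encodedModels_iff :
    (∃ Ns ∈ circ (extAb Ab) (Sum.inl '' Abᶜ) (encodedModels Ab C S),
        Ns ∩ (extAb Ab)ᶜ = N ∩ (extAb Ab)ᶜ) ↔
      ∃ Ms ∈ circ Ab C S, Ms ∩ Abᶜ = Sum.inl ⁻¹' N ∩ Abᶜ := by
  constructor
  · rintro ⟨Ns, hNs, hagree⟩
    refine ⟨Sum.inl ⁻¹' Ns, preimage_inl_mem_circ hNs, ?_⟩
    rw [inter_compl_eq_iff] at hagree ⊢
    exact fun q hq => hagree (Sum.inl q) (inl_mem_extAb.not.2 hq)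
  · rintro ⟨Ms, hMs, hagree⟩
    exact ⟨encode Ab C Ms N, encode_mem_circ hMs, encode_inter_compl_extAb hagree⟩

end

theorem mem_listOf {S : Set α} {q : α} : q ∈ listOf S ↔ q ∈ S := by
  simp [listOf]

theorem Block.elimFixed_mk (Ab C : Set α) (fs : List (PForm α)) (bs : List (Block α)) :
    Block.elimFixed Ab (.mk C fs bs) =
      .mk (Sum.inl '' Abᶜ) ((listOf (C ∪ Ab)ᶜ).map markerFormula ++ fs.map (PForm.map Sum.inl))
        (bs.map (Block.elimFixed Ab)) := by
  rw [Block.elimFixed, List.attach_map_val]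
  rfl

theorem memberModels_elimFixed {Ab C : Set α} {fs : List (PForm α)} {bs : List (Block α)}
    (hbs : ∀ b ∈ bs, ∀ N, (Block.elimFixed Ab b).sat (extAb Ab) N ↔ b.sat Ab (Sum.inl ⁻¹' N)) :
    memberModels (extAb Ab)
        ((listOf (C ∪ Ab)ᶜ).map markerFormula ++ fs.map (PForm.map Sum.inl))
        (bs.map (Block.elimFixed Ab)) =
      encodedModels Ab C (memberModels Ab fs bs) := by
  ext N
  simp only [memberModels, encodedModels, EncodesOn, Set.mem_ofPred_eq, List.forall_mem_append,
    List.forall_mem_map, mem_listOf, sat_markerFormula_iff, PForm.sat_map, and_assoc]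
  exact and_congr_right' (and_congr_right' (forall₂_congr fun b hb => hbs b hb N))

theorem Block.sat_elimFixed_iff (Ab : Set α) :
    ∀ (B : Block α) (N : Set (ExtA α)),
      (Block.elimFixed Ab B).sat (extAb Ab) N ↔ B.sat Ab (Sum.inl ⁻¹' N)
  | .mk C fs bs, N => by
    have hbs : ∀ b ∈ bs, ∀ N, (Block.elimFixed Ab b).sat (extAb Ab) N ↔
        b.sat Ab (Sum.inl ⁻¹' N) := fun b _ => Block.sat_elimFixed_iff Ab b
    rw [Block.elimFixed_mk, Block.sat_mk_iff_s14, Block.sat_mk_iff_s14, memberModels_elimFixed hbs,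
      exists_mem_circ_encodedModels_iff]

theorem NAT.sat_map_elimFixed_iff {Ab : Set α} {T : NAT α} {N : Set (ExtA α)} :
    NAT.sat (extAb Ab) (T.map (Block.elimFixed Ab)) N ↔ NAT.sat Ab T (Sum.inl ⁻¹' N) := by
  simp only [NAT.sat, List.forall_mem_map, Block.sat_elimFixed_iff]

/-- Let `T'` be obtained from the NAT `T` by, for each fixed letter
`q`, introducing two fresh abnormality letters `ab_q` and `ab'_q` into `Ab`, adding
the formula `(q ↔ ab_q) ∧ (ab_q ↔ ¬ab'_q)` as a new member in each block of `T` in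
which `q` is fixed, and declaring `q` described in every block.  Then, modulo the
auxiliary abnormality letters, `T` and `T'` are logically equivalent: they have the
same sets of models on the original alphabet. -/
theorem nat_elim_fixed_letters (Ab : Set α) (T : NAT α) (hWF : ∀ B ∈ T, B.WF Ab) :
    (∀ M : Set α,
        NAT.sat Ab T M ↔
          ∃ N : Set (ExtA α), Sum.inl ⁻¹' N = M ∧
            NAT.sat (extAb Ab) (T.map (Block.elimFixed Ab)) N) ∧
    (∀ N : Set (ExtA α),
        NAT.sat (extAb Ab) (T.map (Block.elimFixed Ab)) N →
          NAT.sat Ab T (Sum.inl ⁻¹' N)) := by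
  refine ⟨fun M => ⟨fun hM => ?_, ?_⟩, fun N => NAT.sat_map_elimFixed_iff.1⟩
  · have preimage_image : Sum.inl ⁻¹' (Sum.inl '' M : Set (ExtA α)) = M :=
      Set.preimage_image_eq M Sum.inl_injective
    exact ⟨Sum.inl '' M, preimage_image, NAT.sat_map_elimFixed_iff.2 (by rwa [preimage_image])⟩
  · rintro ⟨N, rfl, hN⟩
    exact NAT.sat_map_elimFixed_iff.1 hN

end NestedCirc
end
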